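/- arXiv:2512.22413 — 7 statements merged into one kernel-verified Lean document; each statement's English description precedes it below -/
import Mathlib

section
/- For every natural number n with 148 ≤ n ≤ 1571 and every k with 1 ≤ k ≤ n, the number of primes p with (k−1)·n < p ≤ k·n is at least ⌊n/148⌋, i.e. π(k·n) − π((k−1)·n) ≥ ⌊n/148⌋. -/
/-!
No gap between consecutive primes below `1571 ^ 2` exceeds `148`, so every block of `148` consecutive
integers up to `1571 ^ 2` contains a prime (`exists_prime_window`). A row of length `n` contains
`n / 148` disjoint such blocks, hence at least `n / 148` primes (`primeCounting_add_le`).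

The gap bound is a kernel computation. A number `1 < c < (B + 1) ^ 2` coprime to `B !` is prime,
so primality is tested by one gcd. The function `scan` walks down from a candidate `c` in steps of
two until it meets a prime, then jumps up by `148` and repeats; reaching `N` shows that each window
`(a, a + 148]` with `c ≤ a + 148` and `a < N` contains a prime (`scan_sound`).
-/

/-- Greedy search for a chain of primes with consecutive differences at most `148`, starting from
candidates at most `c` and reaching at least `N`; `P` is a product against which candidates
are tested for coprimality, and the first argument is fuel. Recursors are applied directly so that
kernel reduction stays cheap; the recursor on `c` forces the evaluation of the candidate. -/
def scan (fuel P N : ℕ) : ℕ → Bool :=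
  Nat.rec (motive := fun _ => ℕ → Bool) (fun _ => false)
    (fun _ ih c =>
      Nat.rec (motive := fun _ => Bool) false
        (fun m _ =>
          bif Nat.beq (Nat.gcd (P % (m + 1)) (m + 1)) 1 then
            bif Nat.ble (m + 1) 1 then false
            else bif Nat.ble N (m + 1) then true
            else ih (m + 149)
          else ih (m - 1)) c)
    fuel

/-- Forces the evaluation of `P` to a numeral before scanning. -/
def scanForced (fuel P N c : ℕ) : Bool :=
  Nat.rec (motive := fun _ => Bool) false (fun p _ => scan fuel (p + 1) N c) P

theorem scan_of_scanForced {fuel P N c : ℕ} (h : scanForced fuel P N c = true) :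
    scan fuel P N c = true := by
  cases P with
  | zero => simp [scanForced] at h
  | succ p => exact h

theorem prime_of_coprime_factorial {B c : ℕ} (h1 : 1 < c) (hc : c < (B + 1) ^ 2)
    (h : Nat.gcd (B.factorial % c) c = 1) : c.Prime := by
  by_contra hnp
  have hsq := Nat.minFac_sq_le_self (by omega) hnp
  have hp : c.minFac.Prime := Nat.minFac_prime (by omega)
  have hB : c.minFac ≤ B := by
    have : c.minFac < B + 1 := lt_of_pow_lt_pow_left₀ 2 (by omega) (by omega)
    omega
  have hd : c.minFac ∣ Nat.gcd (B.factorial % c) c :=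
    Nat.dvd_gcd ((Nat.dvd_mod_iff c.minFac_dvd).2 (Nat.dvd_factorial hp.pos hB)) c.minFac_dvd
  rw [h] at hd
  exact hp.one_lt.ne' (Nat.dvd_one.1 hd)

theorem scan_sound {B N : ℕ} (hN : N + 148 ≤ (B + 1) ^ 2) (fuel : ℕ) :
    ∀ c, c < N + 148 → scan fuel B.factorial N c = true →
      ∀ a, c ≤ a + 148 → a < N → ∃ q, q.Prime ∧ a < q ∧ q ≤ a + 148 := by
  induction fuel with
  | zero => intro c _ h; simp [scan] at h
  | succ f ih =>
    intro c hcN h a hca haN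
    cases c with
    | zero => simp [scan] at h
    | succ m =>
      change (bif Nat.beq (Nat.gcd (B.factorial % (m + 1)) (m + 1)) 1 then
            bif Nat.ble (m + 1) 1 then false
            else bif Nat.ble N (m + 1) then true
            else scan f B.factorial N (m + 149)
          else scan f B.factorial N (m - 1)) = true at h
      cases hg : Nat.beq (Nat.gcd (B.factorial % (m + 1)) (m + 1)) 1 with
      | false =>
        rw [hg] at h
        exact ih (m - 1) (by omega) h a (by omega) haN
      | true =>
        rw [hg] at h
        cases h1 : Nat.ble (m + 1) 1 with
        | true => simp [h1] at h
        | false =>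
          have h1' : 1 < m + 1 := by
            by_contra hle
            rw [Nat.ble_eq_true_of_le (by omega)] at h1
            exact absurd h1 (by decide)
          have hp : (m + 1).Prime :=
            prime_of_coprime_factorial h1' (by omega) (Nat.eq_of_beq_eq_true hg)
          by_cases ham : a < m + 1
          · exact ⟨m + 1, hp, ham, hca⟩
          · cases h2 : Nat.ble N (m + 1) with
            | true => have := Nat.le_of_ble_eq_true h2; omega
            | false =>
              rw [h1, h2] at h
              have hlt : m + 1 < N := by
                by_contra hle
                rw [Nat.ble_eq_true_of_le (by omega)] at h2
                exact absurd h2 (by decide)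
              exact ih (m + 149) (by omega) h a (by omega) haN

/-- Windows starting below `1600`, where candidates may be smaller than `1571`, are tested
against `41 !`. -/
theorem scan_small : scanForced 1000 (Nat.factorial 41) 1600 147 = true := by
  decide +kernel

/-- Splitting `[1600, 2470000)` into fifty segments keeps the recursion depth moderate. -/
theorem scan_large : ∀ i < 50, scanForced 20000 (Nat.factorial 1571)
    (1600 + 49368 * (i + 1)) (1600 + 49368 * i + 147) = true := by
  decide +kernel

theorem exists_prime_window (a : ℕ) (ha : a < 2470000) :
    ∃ q, q.Prime ∧ a < q ∧ q ≤ a + 148 := by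
  by_cases hs : a < 1600
  · exact scan_sound (B := 41) (N := 1600) (by norm_num) _ _ (by norm_num)
      (scan_of_scanForced scan_small) a (by omega) hs
  · obtain ⟨b, rfl⟩ := Nat.exists_eq_add_of_le (not_lt.1 hs)
    have hdiv := Nat.div_add_mod b 49368
    have hmod := Nat.mod_lt b (show 0 < 49368 by norm_num)
    have hi : b / 49368 < 50 := Nat.div_lt_of_lt_mul (by linarith)
    generalize b / 49368 = i at *
    generalize b % 49368 = r at *
    have hN : 1600 + 49368 * (i + 1) + 148 ≤ (1571 + 1) ^ 2 := by
      have : i + 1 ≤ 50 := hi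
      linarith
    exact scan_sound hN _ _ (by linarith) (scan_of_scanForced (scan_large i hi)) (1600 + b)
      (by linarith) (by linarith)

theorem primeCounting_add_le (a m : ℕ) (h : a + 148 * m ≤ 2468041) :
    Nat.primeCounting a + m ≤ Nat.primeCounting (a + 148 * m) := by
  induction m with
  | zero => simp
  | succ m ih =>
    obtain ⟨q, hq, h1, h2⟩ := exists_prime_window (a + 148 * m) (by omega)
    have hlt : Nat.primeCounting (a + 148 * m) < Nat.primeCounting q := by
      have hmono : Nat.primeCounting (a + 148 * m) ≤ Nat.primeCounting (q - 1) :=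
        Nat.monotone_primeCounting (by omega)
      have hstep : Nat.primeCounting (q - 1) < Nat.primeCounting q := by
        have hq1 : q - 1 + 1 = q := Nat.sub_add_cancel hq.one_le
        unfold Nat.primeCounting
        rw [hq1]
        exact Nat.count_strict_mono hq (Nat.lt_succ_self q)
      omega
    have hle : Nat.primeCounting q ≤ Nat.primeCounting (a + 148 * (m + 1)) :=
      Nat.monotone_primeCounting (by omega)
    have := ih (by omega)
    omega

theorem rows_contain_many_primes_148 :
    ∀ n : ℕ, 148 ≤ n → n ≤ 1571 → ∀ k : ℕ, 1 ≤ k → k ≤ n →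
      n / 148 ≤ Nat.primeCounting (k * n) - Nat.primeCounting ((k - 1) * n) := by
  intro n _ hn k hk hkn
  obtain ⟨j, rfl⟩ : ∃ j, k = j + 1 := ⟨k - 1, by omega⟩
  have hrow : (j + 1) * n = j * n + n := by ring
  have hmax : (j + 1) * n ≤ 1571 * 1571 := Nat.mul_le_mul (by omega) hn
  have hmul : 148 * (n / 148) ≤ n := Nat.mul_div_le n 148
  have hcount := primeCounting_add_le (j * n) (n / 148) (by omega)
  have hle : Nat.primeCounting (j * n + 148 * (n / 148)) ≤ Nat.primeCounting ((j + 1) * n) :=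
    Nat.monotone_primeCounting (by omega)
  rw [Nat.add_sub_cancel]
  omega
end

section
/- For every natural number n with 52 ≤ n ≤ 147 and every k with 1 ≤ k ≤ n, the number of primes p with (k−1)·n < p ≤ k·n is at least ⌊n/52⌋, i.e. π(k·n) − π((k−1)·n) ≥ ⌊n/52⌋. -/
/-!
The number 52 is the largest gap between consecutive primes up to `147 ^ 2 = 21609` (it occurs
between 19609 and 19661), so every window `(x, x + 52]` with `x < 21609` contains a prime
(`exists_prime_window`). A row of length `n` contains `n / 52` disjoint windows of this kind
(`add_le_primeCounting`), which gives the bound.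

The windows are checked by evaluating, in the kernel, a greedy walk `walk` along the primes from
149 to 21609 with steps of at most 52. Primality is certified by a single gcd: a number
`1 < p < 148 ^ 2` coprime to the product of all primes below 148 is prime (`prime_of_gcd`).
-/

/-- The product of all primes below 148. -/
def smallPrimesProd : ℕ :=
  10014646650599190067509233131649940057366334653200433090

theorem dvd_smallPrimesProd {q : ℕ} (hq : q.Prime) (h : q < 148) : q ∣ smallPrimesProd := by
  unfold smallPrimesProd
  interval_cases q <;> first | (exfalso; revert hq; norm_num; done) | norm_num

theorem prime_of_gcd {p : ℕ} (h1 : 1 < p) (h2 : p < 148 ^ 2)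
    (h : Nat.gcd p smallPrimesProd = 1) : p.Prime := by
  by_contra hp
  have hm : p.minFac ^ 2 ≤ p := Nat.minFac_sq_le_self (by omega) hp
  have hlt : p.minFac < 148 := lt_of_pow_lt_pow_left₀ 2 (by norm_num) (hm.trans_lt h2)
  have hpr : p.minFac.Prime := Nat.minFac_prime (by omega)
  have hd := Nat.dvd_gcd (Nat.minFac_dvd p) (dvd_smallPrimesProd hpr hlt)
  rw [h] at hd
  exact hpr.one_lt.ne' (Nat.dvd_one.mp hd)

/-- The largest `j` with `1 ≤ j ≤ m` such that `a + j` is coprime to `smallPrimesProd`,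
or `0` if there is none. -/
def largestStep (a : ℕ) : ℕ → ℕ
  | 0 => 0
  | m + 1 => bif Nat.beq (Nat.gcd (a + (m + 1)) smallPrimesProd) 1 then m + 1
      else largestStep a m

theorem largestStep_spec (a m : ℕ) : largestStep a m = 0 ∨
    (largestStep a m ≤ m ∧ Nat.gcd (a + largestStep a m) smallPrimesProd = 1) := by
  induction m with
  | zero => exact Or.inl rfl
  | succ m ih =>
    rw [largestStep]
    cases hb : Nat.beq (Nat.gcd (a + (m + 1)) smallPrimesProd) 1 with
    | true => exact Or.inr ⟨le_rfl, Nat.eq_of_beq_eq_true hb⟩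
    | false =>
      rcases ih with h | ⟨h, h'⟩
      · exact Or.inl h
      · exact Or.inr ⟨h.trans m.le_succ, h'⟩

/-- The position reached from `a` after the given number of greedy steps, each of length at
most 52 and ending at a number coprime to `smallPrimesProd`; the walk stops once it has
reached 21609. The argument `a` is matched on so that kernel evaluation keeps it a numeral. -/
def walk : ℕ → ℕ → ℕ
  | 0, a => a
  | _ + 1, 0 => 0
  | fuel + 1, a + 1 => bif Nat.ble 21609 (a + 1) then a + 1
      else walk fuel (a + 1 + largestStep (a + 1) 52)

theorem exists_prime_of_walk (fuel : ℕ) : ∀ a x : ℕ, 1 < a → a ≤ x → x < 21609 →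
    x < walk fuel a → ∃ p, p.Prime ∧ x < p ∧ p ≤ x + 52 := by
  induction fuel with
  | zero =>
    intro a x _ h2 _ h4
    simp only [walk] at h4
    omega
  | succ fuel ih =>
    intro a x h1 h2 h3 h4
    obtain ⟨b, rfl⟩ : ∃ b, a = b + 1 := ⟨a - 1, by omega⟩
    have hb : Nat.ble 21609 (b + 1) = false := by
      rw [← Bool.not_eq_true, Nat.ble_eq]
      omega
    rw [walk, hb, cond_false] at h4
    by_cases hx : b + 1 + largestStep (b + 1) 52 ≤ x
    · exact ih _ x (by omega) hx h3 h4
    · rcases largestStep_spec (b + 1) 52 with h | ⟨h, hg⟩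
      · omega
      · exact ⟨_, prime_of_gcd (by omega) (by omega) hg, by omega, by omega⟩

set_option maxRecDepth 100000 in
theorem walk_reaches : 21609 ≤ walk 500 149 := by decide +kernel

theorem exists_prime_window_s4 (x : ℕ) (hx : x < 21609) : ∃ p, p.Prime ∧ x < p ∧ p ≤ x + 52 := by
  -- The primes below 148 are not coprime to `smallPrimesProd`, so the start is done by hand.
  rcases lt_or_ge x 47 with h | h
  · exact ⟨47, by norm_num, by omega, by omega⟩
  rcases lt_or_ge x 97 with h' | h'
  · exact ⟨97, by norm_num, by omega, by omega⟩
  rcases lt_or_ge x 149 with h'' | h''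
  · exact ⟨149, by norm_num, by omega, by omega⟩
  exact exists_prime_of_walk 500 149 x (by norm_num) h'' hx (hx.trans_le walk_reaches)

theorem primeCounting_lt {x y p : ℕ} (hp : p.Prime) (h1 : x < p) (h2 : p ≤ y) :
    Nat.primeCounting x < Nat.primeCounting y := by
  have h : Nat.primeCounting x < Nat.primeCounting p := by
    unfold Nat.primeCounting Nat.primeCounting'
    rw [Nat.count_succ _ p, if_pos hp]
    exact Nat.lt_succ_of_le (Nat.count_monotone _ h1)
  exact h.trans_le (Nat.monotone_primeCounting h2)

theorem add_le_primeCounting (x m : ℕ) (h : x + 52 * m ≤ 21609) :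
    Nat.primeCounting x + m ≤ Nat.primeCounting (x + 52 * m) := by
  induction m with
  | zero => simp
  | succ m ih =>
    obtain ⟨p, hp, h1, h2⟩ := exists_prime_window_s4 (x + 52 * m) (by omega)
    have := primeCounting_lt (y := x + 52 * (m + 1)) hp h1 (by omega)
    have := ih (by omega)
    omega

theorem rows_contain_many_primes_52 :
    ∀ n : ℕ, 52 ≤ n → n ≤ 147 → ∀ k : ℕ, 1 ≤ k → k ≤ n →
      n / 52 ≤ Nat.primeCounting (k * n) - Nat.primeCounting ((k - 1) * n) := by
  intro n _ hn k hk hkn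
  obtain ⟨j, rfl⟩ : ∃ j, k = j + 1 := ⟨k - 1, by omega⟩
  have hle : (j + 1) * n ≤ 147 * 147 := Nat.mul_le_mul (by omega) hn
  have hrow : (j + 1) * n = j * n + n := Nat.succ_mul j n
  have hcount := add_le_primeCounting (j * n) (n / 52) (by omega)
  have hmono : Nat.primeCounting (j * n + 52 * (n / 52)) ≤ Nat.primeCounting ((j + 1) * n) :=
    Nat.monotone_primeCounting (by omega)
  rw [Nat.add_sub_cancel]
  omega
end

section
/- Sierpiński's Hypothesis H₁ is equivalent to a doubly infinite chain of strict inequalities for the prime counting function: (for every n ≥ 2 and every k with 1 ≤ k ≤ n there exists a prime p with (k−1)·n < p ≤ k·n) if and only if (for every k ≥ 1 and every n ≥ k+1 one has π((k+1)·n) > π(k·n)). -/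
/-! Row `k + 1` of the `n`-th matrix is the interval `(k * n, (k + 1) * n]`, so by
`primeCounting_lt_iff` the inequality with parameters `k, n` says that this row contains a prime.
The chain of inequalities thus covers all rows except the first ones, and the first row
`1, …, n` contains the prime `2`. -/

/-- The prime counting function strictly increases from `a` to `b` exactly when the interval
`(a, b]` contains a prime. -/
lemma primeCounting_lt_iff (a b : ℕ) :
    Nat.primeCounting a < Nat.primeCounting b ↔ ∃ p : ℕ, p.Prime ∧ a < p ∧ p ≤ b := by
  unfold Nat.primeCounting Nat.primeCounting'
  constructor
  · intro h
    obtain ⟨p, hp, hpp⟩ := Nat.exists_of_count_lt_count h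
    rw [Set.mem_Ico] at hp
    exact ⟨p, hpp, by omega, by omega⟩
  · rintro ⟨p, hp, hap, hpb⟩
    exact (Nat.count_monotone Nat.Prime (show a + 1 ≤ p from hap)).trans_lt
      (Nat.count_strict_mono hp (by omega))

theorem H1_iff_chain_of_inequalities :
    (∀ n : ℕ, 2 ≤ n → ∀ k : ℕ, 1 ≤ k → k ≤ n →
        ∃ p : ℕ, p.Prime ∧ (k - 1) * n < p ∧ p ≤ k * n) ↔
    (∀ k : ℕ, 1 ≤ k → ∀ n : ℕ, k + 1 ≤ n →
        Nat.primeCounting (k * n) < Nat.primeCounting ((k + 1) * n)) := by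
  simp only [primeCounting_lt_iff]
  constructor
  · intro h k hk n hn
    exact h n (by omega) (k + 1) (by omega) hn
  · intro h n hn k hk hkn
    obtain rfl | hk1 := hk.eq_or_lt
    · exact ⟨2, Nat.prime_two, by omega, by omega⟩
    · obtain ⟨j, rfl⟩ := Nat.exists_eq_add_of_le' hk
      exact h j (by omega) n hkn
end

section
/- Let m be a positive natural number and let η > 0 and x₀ > 0 be real numbers such that |θ(x) − x| < η·x/(ln x)^m for all real x > x₀. Then for all natural numbers n ≥ 1 and k ≥ 1 satisfying k·n > x₀ and (ln(k·n))^m > η·(2·k+1), one has θ((k+1)·n) − θ(k·n) > 0, and hence there exists a prime p with k·n < p ≤ (k+1)·n. -/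
/-! Write `L = (log (k n)) ^ m`, which is positive by hypothesis. Since `log` is increasing, the
error bound at `(k + 1) n` is at most `η (k + 1) n / L`, and the one at `k n` is `η k n / L`. Hence
`θ((k + 1) n) - θ(k n) > n - η (2 k + 1) n / L > 0`. If there were no prime in `(k n, (k + 1) n]`,
the two sums defining `θ` would range over the same primes and the difference would vanish. -/

/-- The first Chebyshev function: `θ(x) = ∑_{p ≤ x, p prime} log p`. -/
noncomputable def chebyshevTheta (x : ℝ) : ℝ :=
  ∑ p ∈ Finset.filter Nat.Prime (Finset.range (⌊x⌋₊ + 1)), Real.log p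

/-- A strict increase of `θ` between two naturals is caused by a prime between them. -/
lemma exists_prime_of_chebyshevTheta_lt {a b : ℕ}
    (h : chebyshevTheta a < chebyshevTheta b) : ∃ p : ℕ, p.Prime ∧ a < p ∧ p ≤ b := by
  by_contra! hno
  refine h.not_ge ?_
  unfold chebyshevTheta
  rw [Nat.floor_natCast, Nat.floor_natCast]
  refine Finset.sum_le_sum_of_subset_of_nonneg ?_ fun p _ _ => Real.log_natCast_nonneg p
  intro p hp
  simp only [Finset.mem_filter, Finset.mem_range] at hp ⊢
  refine ⟨?_, hp.2⟩
  by_contra hlt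
  have := hno p hp.2 (by omega)
  omega

theorem chebyshev_bound_implies_prime_in_row (m : ℕ) (hm : 1 ≤ m)
    (η x₀ : ℝ) (hη : 0 < η) (hx₀ : 0 < x₀)
    (h : ∀ x : ℝ, x₀ < x →
      |chebyshevTheta x - x| < η * x / (Real.log x) ^ m) :
    ∀ n k : ℕ, 1 ≤ n → 1 ≤ k → x₀ < (k : ℝ) * n →
      η * (2 * (k : ℝ) + 1) < (Real.log ((k : ℝ) * n)) ^ m →
      0 < chebyshevTheta (((k : ℝ) + 1) * n) - chebyshevTheta ((k : ℝ) * n) ∧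
        ∃ p : ℕ, p.Prime ∧ k * n < p ∧ p ≤ (k + 1) * n := by
  intro n k hn hk hx hL
  have hn' : (1 : ℝ) ≤ n := by exact_mod_cast hn
  have hk' : (1 : ℝ) ≤ k := by exact_mod_cast hk
  have hkn : (1 : ℝ) ≤ (k : ℝ) * n := one_le_mul_of_one_le_of_one_le hk' hn'
  have hle : (k : ℝ) * n ≤ ((k : ℝ) + 1) * n := by nlinarith
  have h1 := (abs_lt.mp (h _ hx)).2
  have h2 := (abs_lt.mp (h _ (hx.trans_le hle))).1
  have hLpos : 0 < (Real.log ((k : ℝ) * n)) ^ m := lt_trans (by positivity) hL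
  have hLM : (Real.log ((k : ℝ) * n)) ^ m ≤ (Real.log (((k : ℝ) + 1) * n)) ^ m :=
    pow_le_pow_left₀ (Real.log_nonneg hkn) (Real.log_le_log (by linarith) hle) m
  have h3 : η * (((k : ℝ) + 1) * n) / (Real.log (((k : ℝ) + 1) * n)) ^ m ≤
      η * (((k : ℝ) + 1) * n) / (Real.log ((k : ℝ) * n)) ^ m :=
    div_le_div_of_nonneg_left (by positivity) hLpos hLM
  have h4 : η * (((k : ℝ) + 1) * n) / (Real.log ((k : ℝ) * n)) ^ m +
      η * ((k : ℝ) * n) / (Real.log ((k : ℝ) * n)) ^ m < n := by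
    rw [← add_div, div_lt_iff₀ hLpos]
    nlinarith
  have hpos : 0 < chebyshevTheta (((k : ℝ) + 1) * n) - chebyshevTheta ((k : ℝ) * n) := by
    linarith
  refine ⟨hpos, exists_prime_of_chebyshevTheta_lt ?_⟩
  push_cast
  linarith
end

section
/- For every natural number n ≥ 5 there exists a prime p with 8·n < p < 9·n. -/
/-!
The proof is Chebyshev's method with a combination of factorials adapted to the interval
`(8n, 9n]`. With `T k = log k! = ∑ m ≤ k, Λ m * ⌊k / m⌋` and integers `c d` attached to certain
divisors `d` of `5040` (the list `weights`), put `x = 72 n`. Then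

  `∑ d, c d * T ⌊x / d⌋ = ∑ m ≤ x, Λ m * F ⌊x / m⌋`, where `F s = ∑ d, c d * ⌊s / d⌋`.

The `c d` satisfy `∑ c d / d = 0`, so `F` has period `5040`, and a finite check shows that
`F s ≤ 0` except for `s ≡ 8 (mod 5040)`, where `F s = 1`. Since `⌊72 n / m⌋ = 8` means
`8 n < m ≤ 9 n`, the right-hand side is at most `∑ Λ m` over `8 n < m ≤ 9 n` plus `ψ (n / 70)`.
If `(8n, 9n)` contains no prime, the first sum runs over proper prime powers only and is at most
`ψ (9 n) - θ (9 n)`, which is `O(√n log n)`, while `ψ (n / 70) ≤ log 4 * n / 70 + O(√n log n)`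
(`sum_evalWeights_le`).

On the other hand, `T y = y log y - y + O(log y)` makes the left-hand side equal to
`-x ∑ c d log d / d + O(log x)`, and `-72 ∑ c d log d / d > 0.078` (`sum_log_factorial_ge`,
`sum_log_weights_le`), which exceeds `log 4 / 70`. The two estimates contradict each other for
`n ≥ 2 ^ 22` (`error_lt`). For smaller `n`, an explicit list of primes suffices
(`primeChain`).

The weights come from a linear program: make `-∑ c d log d / d` large, with a small penalty on
`∑ |c d|`, subject to `∑ c d / d = 0` and to the sign conditions on `F` over one period.
-/

open ArithmeticFunction (vonMangoldt)

/-! ### The weights and their step function -/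

/-- The step function `s ↦ ∑ c * ⌊s / d⌋` of a list of pairs `(d, c)`. -/
def evalWeights (l : List (ℕ × ℤ)) (s : ℕ) : ℤ :=
  (l.map fun w ↦ w.2 * ((s / w.1 : ℕ) : ℤ)).sum

/-- The pairs `(d, c d)` defining the combination of the factorials `⌊72 n / d⌋!`. -/
def weights : List (ℕ × ℤ) :=
  [(8, 1), (9, -1), (16, -1), (18, 1), (24, -1), (28, 1), (40, -1), (45, 1), (48, 1), (56, -2),
   (63, 1), (80, 1), (84, -1), (90, -1), (112, 1), (120, 1), (126, -1), (140, -1), (144, -1),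
   (168, 1), (180, 1), (240, -1), (280, 2), (360, -1), (420, 2), (560, -1), (630, 1), (840, -2),
   (1008, 2), (1260, -1), (2520, 1), (5040, 3)]

/-- Shifting the argument by a common multiple `N` of the `d` adds the constant
`evalWeights l N = N * ∑ c / d`, which vanishes for `weights` and `N = 5040`. -/
theorem evalWeights_add_mul (l : List (ℕ × ℤ)) (N s k : ℕ) (h : ∀ w ∈ l, 0 < w.1 ∧ w.1 ∣ N) :
    evalWeights l (s + N * k) = evalWeights l s + k * evalWeights l N := by
  induction l with
  | nil => simp [evalWeights]
  | cons w l ih =>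
    have h1 := ih fun v hv ↦ h v (List.mem_cons_of_mem _ hv)
    obtain ⟨h0, q, rfl⟩ := h w List.mem_cons_self
    have h2 : (s + w.1 * q * k) / w.1 = s / w.1 + q * k := by
      rw [mul_assoc, Nat.add_mul_div_left _ _ h0]
    have h3 : w.1 * q / w.1 = q := Nat.mul_div_cancel_left _ h0
    simp only [evalWeights, List.map_cons, List.sum_cons] at h1 ⊢
    rw [h1, h2, h3]
    push_cast
    ring

/-- The positive part of `evalWeights weights s`, as an expression in `ℕ`. -/
def posSum (s : ℕ) : ℕ :=
    s / 8 + s / 18 + s / 28 + s / 45 + s / 48 + s / 63 + s / 80 + s / 112 + s / 120 + s / 168 +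
      s / 180 + 2 * (s / 280) + 2 * (s / 420) + s / 630 + 2 * (s / 1008) + s / 2520 +
      3 * (s / 5040)

/-- The negative part of `evalWeights weights s`, as an expression in `ℕ`. -/
def negSum (s : ℕ) : ℕ :=
    s / 9 + s / 16 + s / 24 + s / 40 + 2 * (s / 56) + s / 84 + s / 90 + s / 126 + s / 140 +
      s / 144 + s / 240 + s / 360 + s / 560 + 2 * (s / 840) + s / 1260

theorem evalWeights_weights_eq (s : ℕ) : evalWeights weights s = posSum s - negSum s := by
  simp only [evalWeights, weights, posSum, negSum, List.map_cons, List.map_nil, List.sum_cons,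
    List.sum_nil]
  push_cast
  ring

theorem evalWeights_weights_small (s : ℕ) (hs : s < 5040) :
    evalWeights weights s ≤ if s = 8 then 1 else 0 := by
  -- Two nested ranges keep the recursion depth of the kernel evaluation small.
  have h : ∀ i < 70, ∀ j < 72,
      posSum (72 * i + j) ≤ negSum (72 * i + j) + if 72 * i + j = 8 then 1 else 0 := by
    decide +kernel
  have h' := h (s / 72) (by omega) (s % 72) (Nat.mod_lt _ (by norm_num))
  rw [Nat.div_add_mod] at h'
  rw [evalWeights_weights_eq]
  split_ifs at h' ⊢ <;> omega

theorem evalWeights_weights_le (s : ℕ) :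
    evalWeights weights s ≤ (if s = 8 then 1 else 0) + if 5040 ≤ s then 1 else 0 := by
  have hp := evalWeights_add_mul weights 5040 (s % 5040) (s / 5040) (by decide)
  rw [Nat.mod_add_div, show evalWeights weights 5040 = 0 by decide +kernel] at hp
  have hs := evalWeights_weights_small (s % 5040) (Nat.mod_lt _ (by norm_num))
  rw [hp, mul_zero, add_zero]
  rcases lt_or_ge s 5040 with h | h
  · rw [Nat.mod_eq_of_lt h] at hs ⊢
    simpa [Nat.not_le.mpr h] using hs
  · rw [if_pos h]
    split_ifs at hs ⊢ <;> omega

/-! ### Factorials and the von Mangoldt function -/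

/-- Legendre's formula. The range of `m` may be any `Ioc 0 x` with `k ≤ x`, so that several
factorials can be summed over a common range. -/
theorem log_factorial_eq (k x : ℕ) (h : k ≤ x) :
    Real.log (k.factorial) = ∑ m ∈ Finset.Ioc 0 x, vonMangoldt m * ((k / m : ℕ) : ℝ) := by
  induction k with
  | zero => simp
  | succ k ih =>
    rw [Nat.factorial_succ, Nat.cast_mul, Real.log_mul (by positivity) (by positivity),
      ih (by omega), ← ArithmeticFunction.vonMangoldt_sum]
    have hd : (k + 1).divisors = (Finset.Ioc 0 x).filter (· ∣ k + 1) := by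
      ext m
      simp only [Nat.mem_divisors, Finset.mem_filter, Finset.mem_Ioc]
      constructor
      · rintro ⟨h1, -⟩
        exact ⟨⟨Nat.pos_of_dvd_of_pos h1 k.succ_pos, (Nat.le_of_dvd k.succ_pos h1).trans h⟩, h1⟩
      · rintro ⟨-, h1⟩
        exact ⟨h1, by omega⟩
    rw [hd, Finset.sum_filter, ← Finset.sum_add_distrib]
    refine Finset.sum_congr rfl fun m _ ↦ ?_
    rw [Nat.succ_div]
    split_ifs <;> push_cast <;> ring

theorem sum_log_factorial_eq (l : List (ℕ × ℤ)) (x : ℕ) :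
    (l.map fun w ↦ (w.2 : ℝ) * Real.log ((x / w.1).factorial)).sum =
      ∑ m ∈ Finset.Ioc 0 x, vonMangoldt m * (evalWeights l (x / m) : ℝ) := by
  induction l with
  | nil => simp [evalWeights]
  | cons w l ih =>
    rw [List.map_cons, List.sum_cons, ih, log_factorial_eq (x / w.1) x (Nat.div_le_self _ _),
      Finset.mul_sum, ← Finset.sum_add_distrib]
    refine Finset.sum_congr rfl fun m _ ↦ ?_
    have e : evalWeights (w :: l) (x / m) =
        w.2 * ((x / w.1 / m : ℕ) : ℤ) + evalWeights l (x / m) := by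
      rw [Nat.div_div_eq_div_mul, mul_comm w.1 m, ← Nat.div_div_eq_div_mul]
      simp only [evalWeights, List.map_cons, List.sum_cons]
    rw [e, Int.cast_add, Int.cast_mul, Int.cast_natCast]
    ring

/-! ### Elementary Stirling bounds -/

theorem log_factorial_bound (k : ℕ) (hk : 0 < k) :
    k * Real.log k - k ≤ Real.log k.factorial ∧
      Real.log k.factorial ≤ k * Real.log k - k + Real.log k + 1 := by
  induction k, hk using Nat.le_induction with
  | base => simp
  | succ k hk ih =>
    have hk' : (0 : ℝ) < k := by exact_mod_cast hk
    rw [Nat.factorial_succ, Nat.cast_mul, Real.log_mul (by positivity) (by positivity)]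
    push_cast
    have e : Real.log ((k : ℝ) + 1) = Real.log k + Real.log (1 + 1 / k) := by
      rw [← Real.log_mul (by positivity) (by positivity)]
      congr 1
      field_simp
    have up : k * Real.log (1 + 1 / (k : ℝ)) ≤ 1 := by
      have := Real.log_le_sub_one_of_pos (show (0 : ℝ) < 1 + 1 / k by positivity)
      calc k * Real.log (1 + 1 / (k : ℝ)) ≤ k * (1 + 1 / (k : ℝ) - 1) := by gcongr
        _ = 1 := by field_simp; ring
    have lo : 1 ≤ (k + 1) * Real.log (1 + 1 / (k : ℝ)) := by
      have := Real.one_sub_inv_le_log_of_pos (show (0 : ℝ) < 1 + 1 / k by positivity)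
      calc (1 : ℝ) = (k + 1) * (1 - (1 + 1 / (k : ℝ))⁻¹) := by field_simp; ring
        _ ≤ _ := by gcongr
    constructor <;> rw [e] <;> nlinarith [ih.1, ih.2]

/-- Increments of `y * log y - y`, whose derivative is `log y`. -/
theorem mul_log_sub_self_mono {a b : ℝ} (ha : 1 ≤ a) (hab : a ≤ b) :
    a * Real.log a - a ≤ b * Real.log b - b ∧
      b * Real.log b - b ≤ a * Real.log a - a + (b - a) * Real.log b := by
  have h0 : 0 < a := by linarith
  have hb : 0 < b := by linarith
  have hl := Real.log_nonneg ha
  have h1 := Real.log_le_sub_one_of_pos (show 0 < b / a by positivity)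
  have h2 := Real.one_sub_inv_le_log_of_pos (show 0 < b / a by positivity)
  rw [Real.log_div hb.ne' h0.ne'] at h1 h2
  have h3 : a * (Real.log b - Real.log a) ≤ b - a := by
    calc _ ≤ a * (b / a - 1) := by gcongr
      _ = _ := by field_simp
  have h4 : b - a ≤ b * (Real.log b - Real.log a) := by
    calc b - a = b * (1 - (b / a)⁻¹) := by field_simp
      _ ≤ _ := by gcongr
  constructor <;> nlinarith

/-- `log ⌊y⌋! = y log y - y + O(log x)` for `y = x / d`. -/
theorem log_factorial_floor_bound (x d : ℕ) (hd : 0 < d) (hx : d ≤ x) :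
    |Real.log ((x / d).factorial) -
      ((x / d : ℝ) * (Real.log x - Real.log d) - x / d)| ≤ Real.log x + 1 := by
  have hd' : (0 : ℝ) < d := by exact_mod_cast hd
  have hx' : (0 : ℝ) < x := by exact_mod_cast hd.trans_le hx
  have hk : 0 < x / d := Nat.div_pos hx hd
  have hk1 : (1 : ℝ) ≤ ((x / d : ℕ) : ℝ) := by exact_mod_cast hk
  have hle : ((x / d : ℕ) : ℝ) ≤ (x : ℝ) / d := Nat.cast_div_le
  have hlt : (x : ℝ) / d < ((x / d : ℕ) : ℝ) + 1 := by
    rw [div_lt_iff₀ hd']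
    exact_mod_cast Nat.lt_mul_of_div_lt (Nat.lt_add_one (x / d)) hd
  have hb := log_factorial_bound _ hk
  have hm := mul_log_sub_self_mono hk1 hle
  have hlog : Real.log ((x / d : ℕ) : ℝ) ≤ Real.log ((x : ℝ) / d) :=
    Real.log_le_log (by linarith) hle
  have hlogx : Real.log ((x : ℝ) / d) ≤ Real.log x :=
    Real.log_le_log (by positivity) (div_le_self hx'.le (by exact_mod_cast hd))
  have hl0 : 0 ≤ Real.log ((x : ℝ) / d) := Real.log_nonneg (hk1.trans hle)
  rw [← Real.log_div hx'.ne' hd'.ne', abs_le]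
  constructor <;> nlinarith

theorem sum_log_factorial_ge (l : List (ℕ × ℤ)) (x : ℕ) (h : ∀ w ∈ l, 0 < w.1 ∧ w.1 ≤ x) :
    x * (Real.log x - 1) * (l.map fun w ↦ (w.2 : ℝ) / w.1).sum -
        x * (l.map fun w ↦ (w.2 : ℝ) * Real.log w.1 / w.1).sum -
        (Real.log x + 1) * (l.map fun w ↦ |(w.2 : ℝ)|).sum ≤
      (l.map fun w ↦ (w.2 : ℝ) * Real.log ((x / w.1).factorial)).sum := by
  induction l with
  | nil => simp
  | cons w l ih =>
    have h1 := ih fun v hv ↦ h v (List.mem_cons_of_mem _ hv)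
    obtain ⟨h0, hx⟩ := h w List.mem_cons_self
    have h2 := log_factorial_floor_bound x w.1 h0 hx
    have h3 := mul_le_mul_of_nonneg_left h2 (abs_nonneg (w.2 : ℝ))
    rw [← abs_mul] at h3
    have h4 := (abs_le.mp h3).1
    simp only [List.map_cons, List.sum_cons]
    have e : (w.2 : ℝ) * (Real.log ((x / w.1).factorial) -
        ((x / w.1 : ℝ) * (Real.log x - Real.log w.1) - x / w.1)) =
        w.2 * Real.log ((x / w.1).factorial) - x * (Real.log x - 1) * ((w.2 : ℝ) / w.1) +
          x * ((w.2 : ℝ) * Real.log w.1 / w.1) := by ring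
    rw [e] at h4
    linarith

theorem log_smooth (a b c e : ℕ) : Real.log (2 ^ a * 3 ^ b * 5 ^ c * 7 ^ e) =
    a * Real.log 2 + b * Real.log 3 + c * Real.log 5 + e * Real.log 7 := by
  rw [Real.log_mul (by positivity) (by positivity), Real.log_mul (by positivity) (by positivity),
    Real.log_mul (by positivity) (by positivity)]
  simp only [Real.log_pow]

/-- The main term: the exact value of `72` times the sum is about `-0.0815`. -/
theorem sum_log_weights_le :
    (weights.map fun w ↦ (w.2 : ℝ) * Real.log w.1 / w.1).sum ≤ -(0.078 / 72) := by
  -- This is `7 ^ 4 = 2401 ≤ 2430 = 2 * 3 ^ 5 * 5`.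
  have h7 : 4 * Real.log 7 ≤ Real.log 2 + 5 * Real.log 3 + Real.log 5 := by
    have h := Real.log_le_log (show (0 : ℝ) < 7 ^ 4 by norm_num)
      (show (7 : ℝ) ^ 4 ≤ 2 ^ 1 * 3 ^ 5 * 5 ^ 1 * 7 ^ 0 by norm_num)
    rw [log_smooth, Real.log_pow] at h
    push_cast at h
    linarith
  have h2 := Real.log_two_lt_d9
  have h2' := Real.log_two_gt_d9
  have h3 := Real.log_three_gt_d9
  have h3' := Real.log_three_lt_d9
  have h5 := Real.log_five_lt_d9
  have h5' := Real.log_five_gt_d9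
  have e : (weights.map fun w ↦ (w.2 : ℝ) * Real.log w.1 / w.1).sum =
      -(-(31 / 5) * Real.log 2 + 237 / 35 * Real.log 3 - 4 / 7 * Real.log 5
        - 11 / 10 * Real.log 7) / 72 := by
    simp only [weights, List.map_cons, List.map_nil, List.sum_cons, List.sum_nil]
    push_cast
    rw [
      show (8 : ℝ) = 2 ^ 3 * 3 ^ 0 * 5 ^ 0 * 7 ^ 0 by norm_num, log_smooth,
      show (9 : ℝ) = 2 ^ 0 * 3 ^ 2 * 5 ^ 0 * 7 ^ 0 by norm_num, log_smooth,
      show (16 : ℝ) = 2 ^ 4 * 3 ^ 0 * 5 ^ 0 * 7 ^ 0 by norm_num, log_smooth,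
      show (18 : ℝ) = 2 ^ 1 * 3 ^ 2 * 5 ^ 0 * 7 ^ 0 by norm_num, log_smooth,
      show (24 : ℝ) = 2 ^ 3 * 3 ^ 1 * 5 ^ 0 * 7 ^ 0 by norm_num, log_smooth,
      show (28 : ℝ) = 2 ^ 2 * 3 ^ 0 * 5 ^ 0 * 7 ^ 1 by norm_num, log_smooth,
      show (40 : ℝ) = 2 ^ 3 * 3 ^ 0 * 5 ^ 1 * 7 ^ 0 by norm_num, log_smooth,
      show (45 : ℝ) = 2 ^ 0 * 3 ^ 2 * 5 ^ 1 * 7 ^ 0 by norm_num, log_smooth,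
      show (48 : ℝ) = 2 ^ 4 * 3 ^ 1 * 5 ^ 0 * 7 ^ 0 by norm_num, log_smooth,
      show (56 : ℝ) = 2 ^ 3 * 3 ^ 0 * 5 ^ 0 * 7 ^ 1 by norm_num, log_smooth,
      show (63 : ℝ) = 2 ^ 0 * 3 ^ 2 * 5 ^ 0 * 7 ^ 1 by norm_num, log_smooth,
      show (80 : ℝ) = 2 ^ 4 * 3 ^ 0 * 5 ^ 1 * 7 ^ 0 by norm_num, log_smooth,
      show (84 : ℝ) = 2 ^ 2 * 3 ^ 1 * 5 ^ 0 * 7 ^ 1 by norm_num, log_smooth,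
      show (90 : ℝ) = 2 ^ 1 * 3 ^ 2 * 5 ^ 1 * 7 ^ 0 by norm_num, log_smooth,
      show (112 : ℝ) = 2 ^ 4 * 3 ^ 0 * 5 ^ 0 * 7 ^ 1 by norm_num, log_smooth,
      show (120 : ℝ) = 2 ^ 3 * 3 ^ 1 * 5 ^ 1 * 7 ^ 0 by norm_num, log_smooth,
      show (126 : ℝ) = 2 ^ 1 * 3 ^ 2 * 5 ^ 0 * 7 ^ 1 by norm_num, log_smooth,
      show (140 : ℝ) = 2 ^ 2 * 3 ^ 0 * 5 ^ 1 * 7 ^ 1 by norm_num, log_smooth,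
      show (144 : ℝ) = 2 ^ 4 * 3 ^ 2 * 5 ^ 0 * 7 ^ 0 by norm_num, log_smooth,
      show (168 : ℝ) = 2 ^ 3 * 3 ^ 1 * 5 ^ 0 * 7 ^ 1 by norm_num, log_smooth,
      show (180 : ℝ) = 2 ^ 2 * 3 ^ 2 * 5 ^ 1 * 7 ^ 0 by norm_num, log_smooth,
      show (240 : ℝ) = 2 ^ 4 * 3 ^ 1 * 5 ^ 1 * 7 ^ 0 by norm_num, log_smooth,
      show (280 : ℝ) = 2 ^ 3 * 3 ^ 0 * 5 ^ 1 * 7 ^ 1 by norm_num, log_smooth,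
      show (360 : ℝ) = 2 ^ 3 * 3 ^ 2 * 5 ^ 1 * 7 ^ 0 by norm_num, log_smooth,
      show (420 : ℝ) = 2 ^ 2 * 3 ^ 1 * 5 ^ 1 * 7 ^ 1 by norm_num, log_smooth,
      show (560 : ℝ) = 2 ^ 4 * 3 ^ 0 * 5 ^ 1 * 7 ^ 1 by norm_num, log_smooth,
      show (630 : ℝ) = 2 ^ 1 * 3 ^ 2 * 5 ^ 1 * 7 ^ 1 by norm_num, log_smooth,
      show (840 : ℝ) = 2 ^ 3 * 3 ^ 1 * 5 ^ 1 * 7 ^ 1 by norm_num, log_smooth,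
      show (1008 : ℝ) = 2 ^ 4 * 3 ^ 2 * 5 ^ 0 * 7 ^ 1 by norm_num, log_smooth,
      show (1260 : ℝ) = 2 ^ 2 * 3 ^ 2 * 5 ^ 1 * 7 ^ 1 by norm_num, log_smooth,
      show (2520 : ℝ) = 2 ^ 3 * 3 ^ 2 * 5 ^ 1 * 7 ^ 1 by norm_num, log_smooth,
      show (5040 : ℝ) = 2 ^ 4 * 3 ^ 2 * 5 ^ 1 * 7 ^ 1 by norm_num, log_smooth
    ]
    push_cast
    ring
  rw [e]
  linarith

/-! ### Small `n` -/

/-- `noDivisor p k` checks that none of the `k` numbers `2, 3, …, k + 1` divides `p`. The recursor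
and `Nat.beq` are used directly because the kernel evaluates them fast. -/
def noDivisor (p k : ℕ) : Bool :=
  Nat.rec true (fun i r ↦ and (not (Nat.beq (p % (i + 2)) 0)) r) k

theorem noDivisor_spec (p k : ℕ) (h : noDivisor p k = true) (m : ℕ) (h1 : 2 ≤ m)
    (h2 : m < k + 2) : ¬ m ∣ p := by
  induction k with
  | zero => omega
  | succ k ih =>
    have h' : (!Nat.beq (p % (k + 2)) 0 && noDivisor p k) = true := h
    simp only [Bool.and_eq_true, Bool.not_eq_true'] at h'
    rcases (show m = k + 2 ∨ m < k + 2 by omega) with rfl | h3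
    · rw [Nat.dvd_iff_mod_eq_zero]
      exact Nat.ne_of_beq_eq_false h'.1
    · exact ih h'.2 h3

theorem prime_of_noDivisor (p : ℕ) (h2 : 2 ≤ p) (h : noDivisor p (p.sqrt - 1) = true) :
    p.Prime := by
  rw [Nat.prime_def_le_sqrt]
  exact ⟨h2, fun m hm hmp ↦ noDivisor_spec p _ h m hm (by omega)⟩

/-- Primes that serve all `n` with `5 ≤ n < 2 ^ 22`. -/
def primeChain : List ℕ :=
  [43, 53, 61, 71, 79, 89, 107, 113, 131, 151, 167, 181, 199, 223, 251, 283, 317, 359, 401, 457,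
   521, 593, 673, 761, 863, 971, 1097, 1237, 1381, 1553, 1753, 1979, 2221, 2477, 2789, 3137, 3533,
   3967, 4463, 5021, 5651, 6361, 7159, 8053, 9059, 10193, 11471, 12899, 14503, 16301, 18341,
   20627, 23209, 26113, 29383, 33053, 37181, 41813, 47041, 52919, 59513, 66959, 75329, 84751,
   95339, 107251, 120661, 135743, 152681, 171763, 193201, 217351, 244507, 275059, 309437, 348097,
   391613, 440567, 495637, 557591, 627271, 705643, 793853, 893059, 1004687, 1130273, 1271561,
   1430503, 1609301, 1810451, 2036747, 2291327, 2577739, 2899943, 3262429, 3670231, 4129007,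
   4645117, 5225743, 5878927, 6613781, 7440491, 8370553, 9416863, 10593943, 11918171, 13407941,
   15083921, 16969411, 19090583, 21476891, 24161497, 27181681, 30579389, 34401811]

theorem prime_of_mem_primeChain : ∀ p ∈ primeChain, p.Prime := by
  have h : ∀ p ∈ primeChain, 2 ≤ p ∧ noDivisor p (p.sqrt - 1) = true := by
    decide +kernel
  exact fun p hp ↦ prime_of_noDivisor p (h p hp).1 (h p hp).2

/-- `Reaches a l b` checks that the intervals `(p / 9, p / 8)`, for `p` in `l`, cover all integers of
`[a, b)` in order: `(p + 7) / 8` is the least `n` with `p ≤ 8 n`, the first one not served by `p`. -/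
def Reaches : ℕ → List ℕ → ℕ → Bool
  | a, [], b => b ≤ a
  | a, p :: l, b => p < 9 * a && Reaches ((p + 7) / 8) l b

theorem exists_mem_of_reaches (l : List ℕ) (a b n : ℕ) (h : Reaches a l b = true) (ha : a ≤ n)
    (hb : n < b) : ∃ p ∈ l, 8 * n < p ∧ p < 9 * n := by
  induction l generalizing a with
  | nil =>
    simp only [Reaches, decide_eq_true_eq] at h
    omega
  | cons p l ih =>
    simp only [Reaches, Bool.and_eq_true, decide_eq_true_eq] at h
    by_cases hn : 8 * n < p
    · exact ⟨p, List.mem_cons_self, hn, by omega⟩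
    · obtain ⟨q, hq, h'⟩ := ih _ h.2 (by omega)
      exact ⟨q, List.mem_cons_of_mem _ hq, h'⟩

theorem exists_prime_of_lt (n : ℕ) (h5 : 5 ≤ n) (hn : n < 2 ^ 22) :
    ∃ p : ℕ, p.Prime ∧ 8 * n < p ∧ p < 9 * n := by
  obtain ⟨p, hp, h⟩ := exists_mem_of_reaches primeChain 5 (2 ^ 22) n (by decide +kernel) h5 hn
  exact ⟨p, prime_of_mem_primeChain p hp, h⟩

/-! ### Large `n` -/

/-- The upper estimate of the weighted sum when `(8n, 9n)` contains no prime: the terms with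
`72 n / m = 8` come from non-primes `m ≤ 9 n`, and those with `5040 ≤ 72 n / m` from `m ≤ n / 70`. -/
theorem sum_evalWeights_le (n : ℕ) (hn : 0 < n)
    (hp : ∀ p : ℕ, p.Prime → 8 * n < p → ¬ p < 9 * n) :
    ∑ m ∈ Finset.Ioc 0 (72 * n), vonMangoldt m * (evalWeights weights (72 * n / m) : ℝ) ≤
      (Chebyshev.psi (9 * n) - Chebyshev.theta (9 * n)) + Chebyshev.psi (n / 70) := by
  rw [Chebyshev.psi_sub_theta_eq_sum_not_prime, Chebyshev.psi,
    show ⌊(9 * n : ℝ)⌋₊ = 9 * n by exact_mod_cast Nat.floor_natCast (9 * n),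
    show ⌊(n / 70 : ℝ)⌋₊ = n / 70 by exact_mod_cast Nat.floor_div_eq_div n 70]
  have h1 : (Finset.Ioc 0 (9 * n)).filter (fun m ↦ ¬ m.Prime) ⊆ Finset.Ioc 0 (72 * n) := by
    intro m hm
    simp only [Finset.mem_filter, Finset.mem_Ioc] at hm ⊢
    omega
  have h2 : Finset.Ioc 0 (n / 70) ⊆ Finset.Ioc 0 (72 * n) :=
    Finset.Ioc_subset_Ioc_right (by omega)
  rw [← Finset.inter_eq_right.mpr h1, ← Finset.inter_eq_right.mpr h2,
    ← Finset.sum_ite_mem, ← Finset.sum_ite_mem, ← Finset.sum_add_distrib]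
  refine Finset.sum_le_sum fun m hm ↦ ?_
  rw [Finset.mem_Ioc] at hm
  have hL : 0 ≤ vonMangoldt m := ArithmeticFunction.vonMangoldt_nonneg
  have h8 : 72 * n / m = 8 → m ∈ (Finset.Ioc 0 (9 * n)).filter (fun m ↦ ¬ m.Prime) := by
    intro h
    have ha : m * 8 ≤ 72 * n := h ▸ Nat.mul_div_le (72 * n) m
    have hb : 72 * n < m * 9 := by
      have := Nat.lt_mul_div_succ (72 * n) hm.1
      rwa [h] at this
    simp only [Finset.mem_filter, Finset.mem_Ioc]
    refine ⟨by omega, fun hpm ↦ ?_⟩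
    have h9 : m = 9 * n := by
      have := hp m hpm (by omega)
      omega
    rw [h9, show 9 * n = 3 * (3 * n) by ring] at hpm
    exact Nat.not_prime_mul (by norm_num) (by omega) hpm
  have h5040 : 5040 ≤ 72 * n / m → m ∈ Finset.Ioc 0 (n / 70) := by
    intro h
    rw [Nat.le_div_iff_mul_le hm.1] at h
    rw [Finset.mem_Ioc]
    omega
  have hF : ((evalWeights weights (72 * n / m) : ℤ) : ℝ) ≤
      ((if 72 * n / m = 8 then 1 else 0) + if 5040 ≤ 72 * n / m then 1 else 0 : ℤ) :=
    Int.cast_le.mpr (evalWeights_weights_le _)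
  refine (mul_le_mul_of_nonneg_left hF hL).trans ?_
  push_cast
  rw [mul_add]
  gcongr
  · split_ifs with ha hb
    · simp
    · exact absurd (h8 ha) hb
    · simp
    · simp
  · split_ifs with ha hb
    · simp
    · exact absurd (h5040 ha) hb
    · simp
    · simp

/-- All error terms together stay below the main term. -/
theorem error_lt (n : ℕ) (hn : 2 ^ 22 ≤ n) :
    2 * √(9 * n : ℝ) * Real.log (9 * n) +
        (Real.log 4 * (n / 70) + 2 * √(n / 70 : ℝ) * Real.log (n / 70)) +
        39 * (Real.log (72 * n) + 1) < 0.078 * (n : ℝ) := by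
  obtain ⟨s, hs0, hs⟩ : ∃ s : ℝ, 0 ≤ s ∧ (n : ℝ) = s ^ 2 :=
    ⟨√n, Real.sqrt_nonneg _, (Real.sq_sqrt n.cast_nonneg).symm⟩
  have hn' : (2 : ℝ) ^ 22 ≤ s ^ 2 := by
    rw [← hs]
    exact_mod_cast hn
  have hs2 : 2048 ≤ s := by
    nlinarith
  rw [hs]
  have l2 := Real.log_two_lt_d9
  have l3 := Real.log_three_lt_d9
  -- Tangent line of `log` at `2048 = √(2 ^ 22)`.
  have hlog : Real.log s ≤ 11 * Real.log 2 + (s / 2048 - 1) := by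
    have h := Real.log_le_sub_one_of_pos (show 0 < s / 2 ^ 11 by positivity)
    rw [Real.log_div (by positivity) (by positivity), Real.log_pow] at h
    norm_num at h
    linarith
  have hlog0 : 0 ≤ Real.log s := Real.log_nonneg (by linarith)
  have e9 : Real.log (9 * s ^ 2) = 2 * Real.log 3 + 2 * Real.log s := by
    rw [show 9 * s ^ 2 = (3 * s) ^ 2 by ring, Real.log_pow,
      Real.log_mul (by norm_num) (by positivity)]
    push_cast
    ring
  have e72 : Real.log (72 * s ^ 2) = 3 * Real.log 2 + 2 * Real.log 3 + 2 * Real.log s := by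
    rw [show 72 * s ^ 2 = 2 ^ 3 * (9 * s ^ 2) by ring, Real.log_mul (by norm_num) (by positivity),
      Real.log_pow, e9]
    push_cast
    ring
  have e4 : Real.log 4 = 2 * Real.log 2 := Real.log_four_eq
  have q9 : √(9 * s ^ 2) = 3 * s := by
    rw [show 9 * s ^ 2 = (3 * s) ^ 2 by ring, Real.sqrt_sq (by positivity)]
  have q70 : √(s ^ 2 / 70) ≤ s / 8 := by
    rw [Real.sqrt_le_left (by positivity)]
    nlinarith [sq_nonneg s]
  have e70 : Real.log (s ^ 2 / 70) ≤ 2 * Real.log s := by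
    have h := Real.log_le_log (show 0 < s ^ 2 / 70 by positivity)
      (div_le_self (by positivity) (by norm_num))
    rw [Real.log_pow] at h
    exact_mod_cast h
  have e70' : 0 ≤ Real.log (s ^ 2 / 70) := Real.log_nonneg (by linarith)
  have m70 : 2 * √(s ^ 2 / 70) * Real.log (s ^ 2 / 70) ≤ 2 * (s / 8) * (2 * Real.log s) := by
    gcongr
  rw [q9, e9, e72, e4]
  have hu : Real.log s ≤ 6.6247 + s / 2048 := by linarith
  have hsu := mul_le_mul_of_nonneg_left hu hs0
  nlinarith

theorem exists_prime_of_ge (n : ℕ) (hn : 2 ^ 22 ≤ n) :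
    ∃ p : ℕ, p.Prime ∧ 8 * n < p ∧ p < 9 * n := by
  by_contra! hcon
  have hn1 : (2 : ℝ) ^ 22 ≤ n := by exact_mod_cast hn
  have hup := sum_evalWeights_le n (by omega) fun p h1 h2 ↦ Nat.not_lt.mpr (hcon p h1 h2)
  rw [← sum_log_factorial_eq] at hup
  have hbd : ∀ w ∈ weights, 0 < w.1 ∧ w.1 ≤ 5040 := by decide
  have hlo := sum_log_factorial_ge weights (72 * n) fun w hw ↦
    ⟨(hbd w hw).1, (hbd w hw).2.trans (by omega)⟩
  have z0 : (weights.map fun w ↦ (w.2 : ℝ) / w.1).sum = 0 := by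
    norm_num [weights]
  have z1 : (weights.map fun w ↦ |(w.2 : ℝ)|).sum = 39 := by
    norm_num [weights]
  rw [z0, z1] at hlo
  push_cast at hlo
  have h9 := Chebyshev.psi_sub_theta_le (show (1 : ℝ) ≤ 9 * n by linarith)
  have h70 := Chebyshev.psi_le (show (1 : ℝ) ≤ n / 70 by linarith)
  have hm := mul_le_mul_of_nonneg_left sum_log_weights_le (show (0 : ℝ) ≤ 72 * n by positivity)
  have he := error_lt n hn
  linarith

theorem prime_between_8n_and_9n :
    ∀ n : ℕ, 5 ≤ n → ∃ p : ℕ, p.Prime ∧ 8 * n < p ∧ p < 9 * n := by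
  intro n hn
  rcases lt_or_ge n (2 ^ 22) with h | h
  · exact exists_prime_of_lt n hn h
  · exact exists_prime_of_ge n h
end

section
/- For every natural number n ≥ 9 and every k with 1 ≤ k ≤ 9, there exists a prime p with (k−1)·n < p ≤ k·n. (Each of the lowest 9 rows of the Sierpiński matrix S_n contains at least one prime, for all n ≥ 9.) -/
/-!
The case `k = 9`, a prime in `(8 n, 9 n]`, is the essential one. For `k ≤ 8` and `n ≥ 72` it is
applied to `m = ⌊(k - 1) n / 8⌋ + 1`, since `(8 m, 9 m]` then lies inside `((k - 1) n, k n]`;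
the values `n < 72` are checked directly.

For `k = 9` the argument is Chebyshev's, with an auxiliary function sharp enough to resolve the
ratio `9 / 8`. Take integers `c_D` (`chebWeights`) with `∑ c_D / D = 0`, and put
`F(w) = ∑ c_D ⌊w / D⌋` (`chebStep`), which is periodic modulo `5040`. From
`log N! = ∑ Λ(m) ⌊N / m⌋` one gets
`∑ c_D log ⌊72 n / D⌋! = ∑ Λ(m) F(⌊72 n / m⌋)`.
The weights are such that `F(8) = 1`, `F(w) ≤ 0` for all other `w < 2016`, and `F(w) ≤ 1` beyond
(`chebStep_le`), so the right side is at most `ψ(9 n) - ψ(8 n) + ψ(n / 28)`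
(`sum_weights_log_factorial_le`). By Stirling's formula the left side is at least
`0.1317 n - O(log n)` (`le_sum_weights_log_factorial`), while the known bound on `ψ` gives
`ψ(n / 28) ≤ (log 4 / 28) n + O(√n log n)`, and `log 4 / 28 < 0.0496`. Proper prime powers
contribute only `O(√n log n)`, so a prime exists once `n ≥ 1440 ^ 2` (`exists_prime_of_large`).
Smaller `n` are covered by a ladder of primes with successive ratios about `9 / 8`.
-/

namespace SierpinskiRows

open Real Finset Chebyshev
open ArithmeticFunction hiding log
open scoped Nat

/-! ### The auxiliary step function -/

/-- Pairs `(D, c_D)` with `∑ c_D / D = 0`, every `D` dividing `5040`. They come from a linear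
program: maximise `-∑ c_D log D / D` subject to the bounds on `∑ c_D ⌊w / D⌋` of
`chebStep_le`. -/
def chebWeights : List (ℕ × ℤ) :=
  [(8, 1), (9, -1), (16, -1), (18, 1), (24, -1), (28, 1), (40, -1), (45, 1), (48, 1), (56, -2),
    (63, 1), (80, 1), (84, -1), (90, -1), (112, 1), (120, 1), (126, -1), (140, -1), (144, -1),
    (168, 2), (240, -1), (280, 3), (315, -1), (336, -1), (420, 2), (560, -2), (630, 2),
    (840, -4), (1008, 2), (1680, 3), (2520, 1)]

/-- The step function `w ↦ ∑ c_D ⌊w / D⌋`, restricted to integers `w`. -/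
def chebStep (w : ℕ) : ℤ := (chebWeights.map fun e ↦ e.2 * ((w / e.1 : ℕ) : ℤ)).sum

lemma chebStep_period (q r : ℕ) : chebStep (5040 * q + r) = chebStep r := by
  have hdvd : ∀ e ∈ chebWeights, (5040 * q + r) / e.1 = 5040 / e.1 * q + r / e.1 := by
    intro e he
    have h : ∀ e ∈ chebWeights, 0 < e.1 ∧ e.1 ∣ 5040 := by decide
    obtain ⟨h0, k, hk⟩ := h e he
    rw [hk, Nat.mul_div_cancel_left _ h0, mul_assoc, Nat.mul_add_div h0]
  have h1 : chebStep (5040 * q + r) = chebStep 5040 * q + chebStep r := by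
    unfold chebStep
    rw [← List.sum_map_mul_right, ← List.sum_map_add]
    congr 1
    refine List.map_congr_left fun e he ↦ ?_
    rw [hdvd e he]; push_cast; ring
  rw [h1, show chebStep 5040 = 0 by decide]; ring

lemma chebStep_le (w : ℕ) :
    chebStep w ≤ (if w = 8 then 1 else 0) + (if 2016 ≤ w then 1 else 0) := by
  -- The residue is written as `72 * i + j` to keep the recursion of the kernel evaluation shallow.
  have key : ∀ i < 70, ∀ j < 72, chebStep (72 * i + j) ≤
      (if 72 * i + j = 8 then 1 else 0) + (if 2016 ≤ 72 * i + j then 1 else 0) := by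
    decide +kernel
  have h1 := key (w % 5040 / 72) (by omega) (w % 5040 % 72) (by omega)
  rw [Nat.div_add_mod, ← chebStep_period (w / 5040), Nat.div_add_mod] at h1
  split_ifs at h1 ⊢ <;> omega

/-! ### Weighted log-factorials and `ψ` -/

/-- Legendre's formula in terms of `Λ`. Terms with `m > N` vanish, so the range may be extended
to a common `M`. -/
lemma log_factorial_eq_sum {N M : ℕ} (h : N ≤ M) :
    log (N ! : ℝ) = ∑ m ∈ Ioc 0 M, Λ m * ((N / m : ℕ) : ℝ) := by
  have h1 : log (N ! : ℝ) = ∑ k ∈ Ioc 0 N, log (k : ℝ) := by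
    induction N with
    | zero => simp
    | succ k ih =>
      rw [Nat.factorial_succ, Finset.sum_Ioc_succ_top (Nat.zero_le k), ← ih (by omega)]
      push_cast
      rw [log_mul (by positivity) (by positivity)]; ring
  have h2 := sum_Ioc_mul_zeta_eq_sum Λ N
  rw [vonMangoldt_mul_zeta] at h2
  rw [h1]
  refine Eq.trans (by simp [ArithmeticFunction.log_apply]) (h2.trans ?_)
  refine Finset.sum_subset (Ioc_subset_Ioc_right h) fun m _ hm ↦ ?_
  have : N < m := by simp_all
  simp [Nat.div_eq_of_lt this]

/-- The weighted sum of log-factorials is `∑ Λ(m) chebStep ⌊72 n / m⌋`; here `⌊72 n / m⌋ = 8` means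
`8 n < m ≤ 9 n`, and `⌊72 n / m⌋ ≥ 2016` means `m ≤ n / 28`. -/
lemma sum_weights_log_factorial_le (n : ℕ) :
    (chebWeights.map fun e ↦ (e.2 : ℝ) * log ((72 * n / e.1)! : ℝ)).sum
      ≤ ψ (9 * n : ℕ) - ψ (8 * n : ℕ) + ψ (n / 28 : ℕ) := by
  have h8 : ∀ e ∈ chebWeights, 8 ≤ e.1 := by decide
  have h1 : (chebWeights.map fun e ↦ (e.2 : ℝ) * log ((72 * n / e.1)! : ℝ)).sum
      = ∑ m ∈ Ioc 0 (9 * n), Λ m * (chebStep (72 * n / m) : ℝ) := by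
    have hswap : ∀ l : List (ℕ × ℤ), (∀ e ∈ l, 8 ≤ e.1) →
        (l.map fun e ↦ (e.2 : ℝ) * log ((72 * n / e.1)! : ℝ)).sum
        = ∑ m ∈ Ioc 0 (9 * n),
            Λ m * (((l.map fun e ↦ e.2 * ((72 * n / m / e.1 : ℕ) : ℤ)).sum : ℤ) : ℝ) := by
      intro l
      induction l with
      | nil => simp
      | cons e l ih =>
        intro hl
        have he : 8 ≤ e.1 := hl e (by simp)
        rw [List.map_cons, List.sum_cons, ih fun e' h' ↦ hl e' (by simp [h']),
          log_factorial_eq_sum (M := 9 * n), mul_sum, ← sum_add_distrib]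
        · refine sum_congr rfl fun m _ ↦ ?_
          rw [Nat.div_right_comm]
          simp only [List.map_cons, List.sum_cons]
          rw [Int.cast_add, Int.cast_mul, Int.cast_natCast]; ring
        · calc 72 * n / e.1 ≤ 72 * n / 8 := Nat.div_le_div_left he (by norm_num)
            _ = 9 * n := by omega
    exact hswap _ h8
  have h2 : ∀ m ∈ Ioc 0 (9 * n), Λ m * (chebStep (72 * n / m) : ℝ) ≤
      (if m ∈ Ioc (8 * n) (9 * n) then Λ m else 0) + (if m ∈ Ioc 0 (n / 28) then Λ m else 0) := by
    intro m hm
    have hm0 : 0 < m := (mem_Ioc.1 hm).1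
    have hL : 0 ≤ Λ m := vonMangoldt_nonneg
    have hs : (chebStep (72 * n / m) : ℝ) ≤
        (if 72 * n / m = 8 then 1 else 0) + (if 2016 ≤ 72 * n / m then 1 else 0) := by
      exact_mod_cast chebStep_le (72 * n / m)
    have e1 : 72 * n / m = 8 ↔ m ∈ Ioc (8 * n) (9 * n) := by
      rw [Nat.div_eq_iff hm0, mem_Ioc]; omega
    have e2 : 2016 ≤ 72 * n / m ↔ m ∈ Ioc 0 (n / 28) := by
      rw [Nat.le_div_iff_mul_le hm0, mem_Ioc]; omega
    simp only [e1, e2] at hs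
    refine (mul_le_mul_of_nonneg_left hs hL).trans_eq ?_
    rw [mul_add]; simp only [mul_ite, mul_one, mul_zero]
  rw [h1]
  refine (sum_le_sum h2).trans_eq ?_
  rw [sum_add_distrib, ← sum_filter, ← sum_filter]
  have f1 : (Ioc 0 (9 * n)).filter (· ∈ Ioc (8 * n) (9 * n)) = Ioc (8 * n) (9 * n) := by
    ext m; simp only [mem_filter, mem_Ioc]; omega
  have f2 : (Ioc 0 (9 * n)).filter (· ∈ Ioc 0 (n / 28)) = Ioc 0 (n / 28) := by
    ext m; simp only [mem_filter, mem_Ioc]; omega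
  rw [f1, f2]
  simp only [psi, Nat.floor_natCast]
  rw [← sum_Ioc_consecutive _ (Nat.zero_le (8 * n)) (by omega : 8 * n ≤ 9 * n)]
  ring

/-! ### Stirling's formula with explicit error -/

lemma log_factorial_le {N : ℕ} (hN : 1 ≤ N) :
    log (N ! : ℝ) ≤ N * log N - N + log N + 1 := by
  induction N, hN using Nat.le_induction with
  | base => simp
  | succ k hk ih =>
    have hk' : (0 : ℝ) < k := by exact_mod_cast hk
    have h := log_le_sub_one_of_pos (x := (k : ℝ) / (k + 1)) (by positivity)
    rw [log_div (by positivity) (by positivity)] at h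
    have h' : ((k : ℝ) + 1) * (log k - log (k + 1)) ≤ -1 := by
      calc ((k : ℝ) + 1) * (log k - log (k + 1)) ≤ (k + 1) * (k / (k + 1) - 1) := by gcongr
        _ = -1 := by field_simp; ring
    rw [Nat.factorial_succ]; push_cast
    rw [log_mul (by positivity) (by positivity)]
    nlinarith

lemma le_log_factorial (N : ℕ) : N * log (N + 1) - N ≤ log (N ! : ℝ) := by
  induction N with
  | zero => simp
  | succ k ih =>
    have h := log_le_sub_one_of_pos (x := ((k : ℝ) + 2) / (k + 1)) (by positivity)
    rw [log_div (by positivity) (by positivity)] at h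
    have h' : ((k : ℝ) + 1) * (log (k + 2) - log (k + 1)) ≤ 1 := by
      calc ((k : ℝ) + 1) * (log (k + 2) - log (k + 1)) ≤ (k + 1) * ((k + 2) / (k + 1) - 1) := by
            gcongr
        _ = 1 := by field_simp; ring
    rw [Nat.factorial_succ]; push_cast
    rw [log_mul (by positivity) (by positivity), show (k : ℝ) + 1 + 1 = k + 2 by ring]
    nlinarith

lemma mul_log_sub_mono {x y : ℝ} (hx : 1 ≤ x) (hxy : x ≤ y) :
    x * log x - x ≤ y * log y - y := by
  have hx0 : 0 < x := by linarith
  have hy0 : 0 < y := by linarith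
  have h := log_le_sub_one_of_pos (x := x / y) (by positivity)
  rw [log_div (by positivity) (by positivity)] at h
  have h' : y * (log x - log y) ≤ x - y := by
    calc y * (log x - log y) ≤ y * (x / y - 1) := by gcongr
      _ = x - y := by field_simp
  nlinarith [mul_nonneg (sub_nonneg.2 hxy) (log_nonneg hx)]

lemma abs_log_factorial_floor_sub_le {x : ℝ} (hx : 1 ≤ x) :
    |log (⌊x⌋₊ ! : ℝ) - (x * log x - x)| ≤ log x + 1 := by
  have hN : 1 ≤ ⌊x⌋₊ := (Nat.one_le_floor_iff x).2 hx
  have hN' : (1 : ℝ) ≤ ⌊x⌋₊ := by exact_mod_cast hN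
  have hle : (⌊x⌋₊ : ℝ) ≤ x := Nat.floor_le (by linarith)
  have hlt : x < ⌊x⌋₊ + 1 := Nat.lt_floor_add_one x
  have u := log_factorial_le hN
  have l := le_log_factorial ⌊x⌋₊
  have m1 := mul_log_sub_mono hN' hle
  have m2 := mul_log_sub_mono hx hlt.le
  have g1 : log (⌊x⌋₊ : ℝ) ≤ log x := log_le_log (by linarith) hle
  have g2 : log ((⌊x⌋₊ : ℝ) + 1) ≤ log 2 + log x := by
    rw [← log_mul (by norm_num) (by linarith)]
    exact log_le_log (by linarith) (by linarith)
  have := log_two_lt_d9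
  rw [abs_le]
  constructor <;> nlinarith

/-! ### The main term and large `n` -/

lemma log_smooth (i j k l : ℕ) :
    log ((2 ^ i * 3 ^ j * 5 ^ k * 7 ^ l : ℕ) : ℝ) = i * log 2 + j * log 3 + k * log 5 + l * log 7 := by
  push_cast
  rw [log_mul (by positivity) (by positivity), log_mul (by positivity) (by positivity),
    log_mul (by positivity) (by positivity), log_pow, log_pow, log_pow, log_pow]

/-- The exponent of the prime `p` in `d`, truncated at `4`, in a form that evaluates quickly.
No `D` in `chebWeights` is divisible by the fifth power of a prime. -/
def smallVal (p d : ℕ) : ℕ := ((List.range 4).filter fun k ↦ p ^ (k + 1) ∣ d).length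

lemma sum_weights_div : (chebWeights.map fun e ↦ (e.2 : ℝ) / e.1).sum = 0 := by
  norm_num [chebWeights]

lemma sum_weights_div_mul_log : (chebWeights.map fun e ↦ (e.2 : ℝ) / e.1 * log e.1).sum =
    (236 / 35 * log 2 - 36 / 5 * log 3 + 5 / 14 * log 5 + 13 / 10 * log 7) / 72 := by
  have hv : ∀ e ∈ chebWeights, e.1 = 2 ^ smallVal 2 e.1 * 3 ^ smallVal 3 e.1 *
      5 ^ smallVal 5 e.1 * 7 ^ smallVal 7 e.1 := by decide +kernel
  have hq : ∀ p ∈ [(2, (236 / 35 / 72 : ℚ)), (3, -36 / 5 / 72), (5, 5 / 14 / 72),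
      (7, 13 / 10 / 72)],
      (chebWeights.map fun e ↦ (e.2 : ℚ) / e.1 * smallVal p.1 e.1).sum = p.2 := by
    decide +kernel
  have hr : ∀ p ∈ [(2, (236 / 35 / 72 : ℚ)), (3, -36 / 5 / 72), (5, 5 / 14 / 72),
      (7, 13 / 10 / 72)],
      (chebWeights.map fun e ↦ (e.2 : ℝ) / e.1 * smallVal p.1 e.1).sum = ((p.2 : ℚ) : ℝ) := by
    intro p hp
    rw [← hq p hp, ← Rat.coe_castHom, map_list_sum, List.map_map]
    congr 1
    refine List.map_congr_left fun e _ ↦ ?_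
    simp
  have h2 := hr (2, 236 / 35 / 72) (by simp)
  have h3 := hr (3, -36 / 5 / 72) (by simp)
  have h5 := hr (5, 5 / 14 / 72) (by simp)
  have h7 := hr (7, 13 / 10 / 72) (by simp)
  have hsum : (chebWeights.map fun e ↦ (e.2 : ℝ) / e.1 * log e.1) = chebWeights.map fun e ↦
      ((e.2 : ℝ) / e.1 * smallVal 2 e.1) * log 2 + ((e.2 : ℝ) / e.1 * smallVal 3 e.1) * log 3
      + ((e.2 : ℝ) / e.1 * smallVal 5 e.1) * log 5
      + ((e.2 : ℝ) / e.1 * smallVal 7 e.1) * log 7 := by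
    refine List.map_congr_left fun e he ↦ ?_
    have hl : log (e.1 : ℝ) = smallVal 2 e.1 * log 2 + smallVal 3 e.1 * log 3
        + smallVal 5 e.1 * log 5 + smallVal 7 e.1 * log 7 := by
      conv_lhs => rw [hv e he]
      exact log_smooth _ _ _ _
    rw [hl]; ring
  rw [hsum, List.sum_map_add, List.sum_map_add, List.sum_map_add, List.sum_map_mul_right,
    List.sum_map_mul_right, List.sum_map_mul_right, List.sum_map_mul_right, h2, h3, h5, h7]
  push_cast; ring

/-- From `7 ^ 4 = 2401` and `2400 = 2 ^ 5 * 3 * 5 ^ 2`. -/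
lemma log_seven_lt : log 7 < 1.945911 := by
  have h : log ((2401 : ℝ) / 2400) ≤ 2401 / 2400 - 1 := log_le_sub_one_of_pos (by norm_num)
  have h1 : log (2401 : ℝ) = 4 * log 7 := by
    have := log_smooth 0 0 0 4
    norm_num at this; exact this
  have h2 : log (2400 : ℝ) = 5 * log 2 + log 3 + 2 * log 5 := by
    have := log_smooth 5 1 2 0
    norm_num at this; exact this
  rw [log_div (by norm_num) (by norm_num), h1, h2] at h
  linarith [log_two_lt_d9, log_three_lt_d9, log_five_lt_d9]

/-- Stirling's formula for each factorial. As `∑ c_D / D = 0`, the terms of order `n log n` and the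
linear terms of Stirling's formula cancel, leaving `-72 n ∑ c_D log D / D ≥ 0.1317 n`; the constant
`44` is `∑ |c_D|`. -/
lemma le_sum_weights_log_factorial {n : ℕ} (hn : 35 ≤ n) :
    0.1317 * n - 44 * (log (9 * n) + 1) ≤
      (chebWeights.map fun e ↦ (e.2 : ℝ) * log ((72 * n / e.1)! : ℝ)).sum := by
  have hn0 : (35 : ℝ) ≤ n := by exact_mod_cast hn
  have hbd : ∀ e ∈ chebWeights, 8 ≤ e.1 ∧ e.1 ≤ 2520 := by decide
  have hterm : ∀ e ∈ chebWeights,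
      ((e.2 : ℝ) / e.1 * (72 * n * (log (72 * n) - 1)) + (e.2 : ℝ) / e.1 * log e.1 * (-(72 * n)))
        + |(e.2 : ℝ)| * (-(log (9 * n) + 1)) ≤ (e.2 : ℝ) * log ((72 * n / e.1)! : ℝ) := by
    intro e he
    obtain ⟨h8, h2520⟩ := hbd e he
    have h8' : (8 : ℝ) ≤ e.1 := by exact_mod_cast h8
    have h2520' : (e.1 : ℝ) ≤ 2520 := by exact_mod_cast h2520
    set x : ℝ := 72 * n / e.1 with hx
    have hx1 : 1 ≤ x := by rw [hx, le_div_iff₀ (by linarith)]; linarith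
    have hx9 : x ≤ 9 * n := by rw [hx, div_le_iff₀ (by linarith)]; nlinarith
    have hfl : ⌊x⌋₊ = 72 * n / e.1 := by
      rw [hx, ← Nat.floor_div_eq_div (K := ℝ)]; push_cast; rfl
    have herr := abs_log_factorial_floor_sub_le hx1
    rw [hfl] at herr
    have hlog : log x ≤ log (9 * n) := log_le_log (by linarith) hx9
    have hlx : log x = log (72 * n) - log e.1 := by
      rw [hx, log_div (by positivity) (by linarith)]
    have h1 := abs_le.1 ((abs_mul (e.2 : ℝ) (log ((72 * n / e.1)! : ℝ) - (x * log x - x))).le.trans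
      (mul_le_mul_of_nonneg_left (herr.trans (by linarith : _ ≤ log (9 * n) + 1)) (abs_nonneg _)))
    have h2 : (e.2 : ℝ) * (x * log x - x) = (e.2 : ℝ) / e.1 * (72 * n * (log (72 * n) - 1)) +
        (e.2 : ℝ) / e.1 * log e.1 * (-(72 * n)) := by
      rw [hlx, hx]; field_simp; ring
    linarith [h1.1]
  have habs : (chebWeights.map fun e ↦ |(e.2 : ℝ)|).sum = 44 := by
    norm_num [chebWeights]
  refine le_trans ?_ (List.sum_le_sum hterm)
  rw [List.sum_map_add, List.sum_map_add, List.sum_map_mul_right, List.sum_map_mul_right,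
    List.sum_map_mul_right, habs, sum_weights_div, sum_weights_div_mul_log]
  have hc : 0.1317 ≤ -(236 / 35 * log 2 - 36 / 5 * log 3 + 5 / 14 * log 5 + 13 / 10 * log 7) := by
    linarith [log_two_lt_d9, log_three_gt_d9, log_five_lt_d9, log_seven_lt]
  nlinarith

/-- If `(8 n, 9 n]` had no prime, `ψ(9 n) - ψ(8 n)` would only count proper prime powers and be
`O(√n log n)`, whereas the two bounds on the weighted log-factorials make it at least
`(0.1317 - log 4 / 28) n - O(√n log n)`. -/
lemma exists_prime_of_large {n : ℕ} (hn : 1440 ^ 2 ≤ n) :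
    ∃ p : ℕ, p.Prime ∧ 8 * n < p ∧ p ≤ 9 * n := by
  by_contra! hno
  have hn0 : (1440 ^ 2 : ℝ) ≤ n := by exact_mod_cast hn
  set s := √(n : ℝ) with hs
  have hss : s ^ 2 = n := sq_sqrt (by positivity)
  have hs0 : 1440 ≤ s := le_sqrt_of_sq_le hn0
  set ℓ := log (9 * n) with hℓ
  -- `log s ≤ log 1440 + (s / 1440 - 1)` and `1440 = 2 ^ 5 * 3 ^ 2 * 5`.
  have hℓs : ℓ ≤ s / 80 := by
    have h1 : log (s / 1440) ≤ s / 1440 - 1 := log_le_sub_one_of_pos (by positivity)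
    have h2 : log (1440 : ℝ) = 5 * log 2 + 2 * log 3 + log 5 := by
      have := log_smooth 5 2 1 0
      norm_num at this; exact this
    have h3 : log (9 : ℝ) = 2 * log 3 := by
      have := log_smooth 0 2 0 0
      norm_num at this; exact this
    rw [log_div (by positivity) (by norm_num), h2] at h1
    have h4 : ℓ = 2 * log 3 + 2 * log s := by
      rw [hℓ, ← hss, log_mul (by norm_num) (by positivity), h3, log_pow]; norm_num
    linarith [log_two_lt_d9, log_three_lt_d9, log_five_lt_d9]
  have hℓ0 : 0 ≤ ℓ := log_nonneg (by linarith)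
  have hθ : θ (9 * n : ℕ) = θ (8 * n : ℕ) := by
    simp only [theta, Nat.floor_natCast]
    congr 1
    ext p
    simp only [mem_filter, mem_Ioc]
    constructor
    · rintro ⟨⟨h0, h9⟩, hp⟩
      exact ⟨⟨h0, not_lt.1 fun h ↦ absurd h9 (not_le.2 (hno p hp h))⟩, hp⟩
    · rintro ⟨⟨h0, h8⟩, hp⟩
      exact ⟨⟨h0, by omega⟩, hp⟩
  have hψ : ψ (9 * n : ℕ) - ψ (8 * n : ℕ) ≤ 6 * s * ℓ := by
    have h1 := psi_sub_theta_le (x := (9 * n : ℕ)) (by push_cast; linarith)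
    have h2 := theta_le_psi (8 * n : ℕ)
    have h3 : √((9 * n : ℕ) : ℝ) = 3 * s := by
      push_cast
      rw [sqrt_mul (by norm_num), show (9 : ℝ) = 3 ^ 2 by norm_num, sqrt_sq (by norm_num)]
    rw [h3] at h1
    push_cast at h1 h2 hθ ⊢
    linarith
  have hψ' : ψ (n / 28 : ℕ) ≤ log 4 * (n / 28) + 0.4 * s * ℓ := by
    have h0 : ψ (n / 28 : ℕ) = ψ ((n : ℝ) / 28) := by
      rw [psi_eq_psi_coe_floor ((n : ℝ) / 28), Nat.floor_div_ofNat, Nat.floor_natCast]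
    have h1 := psi_le (x := (n : ℝ) / 28) (by linarith)
    have h2 : √((n : ℝ) / 28) ≤ s / 5 := by
      apply sqrt_le_iff.2
      constructor
      · positivity
      · rw [div_pow, hss]; linarith
    have h3 : log ((n : ℝ) / 28) ≤ ℓ := log_le_log (by positivity) (by linarith)
    have h4 : 0 ≤ log ((n : ℝ) / 28) := log_nonneg (by linarith)
    have h5 : √((n : ℝ) / 28) * log ((n : ℝ) / 28) ≤ s / 5 * ℓ :=
      mul_le_mul h2 h3 h4 (by positivity)
    rw [h0]; linarith
  have hlow := le_sum_weights_log_factorial (n := n) (by omega)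
  have hup := sum_weights_log_factorial_le n
  have h4 := log_four_eq
  have h2 := log_two_lt_d9
  have hsl : s * ℓ ≤ s * (s / 80) := by gcongr
  rw [← hℓ] at hlow
  have : log 4 * (n / 28) ≤ 0.04952 * s ^ 2 := by rw [h4, hss]; nlinarith
  nlinarith

/-! ### Small `n` -/

/-- Primes, each the largest one not exceeding `9 * ⌈q / 8⌉`, where `q` is its predecessor
(`72` for the first). -/
def primeLadder : List ℕ :=
  [79, 89, 107, 113, 131, 151, 167, 181, 199, 223, 251, 283, 317, 359, 401, 457, 521, 593, 673,
    761, 863, 971, 1097, 1237, 1381, 1553, 1753, 1979, 2221, 2477, 2789, 3137, 3533, 3967, 4463,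
    5021, 5651, 6361, 7159, 8053, 9059, 10193, 11471, 12899, 14503, 16301, 18341, 20627, 23209,
    26113, 29383, 33053, 37181, 41813, 47041, 52919, 59513, 66959, 75329, 84751, 95339, 107251,
    120661, 135743, 152681, 171763, 193201, 217351, 244507, 275059, 309437, 348097, 391613,
    440567, 495637, 557591, 627271, 705643, 793853, 893059, 1004687, 1130273, 1271561, 1430503,
    1609301, 1810451, 2036747, 2291327, 2577739, 2899943, 3262429, 3670231, 4129007, 4645117,
    5225743, 5878927, 6613781, 7440491, 8370553, 9416863, 10593943, 11918171, 13407941,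
    15083921, 16969411]

lemma primeLadder_prime : ∀ p ∈ primeLadder, p.Prime := by
  unfold primeLadder
  norm_num

/-- The first member `b` of the ladder above `8 n` has a predecessor `a ≤ 8 n`, so
`b ≤ 9 ⌈a / 8⌉ ≤ 9 n`. -/
lemma exists_prime_of_lt_getLast (l : List ℕ) (q : ℕ) (hl : ∀ p ∈ l, p.Prime)
    (hc : (q :: l).IsChain fun a b ↦ b ≤ 9 * ((a + 7) / 8)) {n : ℕ} (hq : q ≤ 8 * n)
    (hn : 8 * n < (q :: l).getLast (by simp)) :
    ∃ p : ℕ, p.Prime ∧ 8 * n < p ∧ p ≤ 9 * n := by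
  induction l generalizing q with
  | nil => simp at hn; omega
  | cons b l ih =>
    rw [List.isChain_cons_cons] at hc
    by_cases hb : b ≤ 8 * n
    · exact ih b (fun p hp ↦ hl p (by simp [hp])) hc.2 hb (by simpa using hn)
    · exact ⟨b, hl b (by simp), by omega, by omega⟩

lemma exists_prime_top_row {n : ℕ} (hn : 9 ≤ n) :
    ∃ p : ℕ, p.Prime ∧ 8 * n < p ∧ p ≤ 9 * n := by
  rcases le_or_gt (1440 ^ 2) n with h | h
  · exact exists_prime_of_large h
  · have hlast : (72 :: primeLadder).getLast (by simp) = 16969411 := by decide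
    exact exists_prime_of_lt_getLast primeLadder 72 primeLadder_prime (by decide +kernel) (by omega)
      (by omega)

lemma exists_prime_of_lt_72 : ∀ n < 72, 9 ≤ n → ∀ k < 10, 1 ≤ k →
    ∃ p ∈ Finset.Ioc ((k - 1) * n) (k * n), p.Prime := by
  decide +kernel

end SierpinskiRows

theorem lowest_nine_rows_contain_primes :
    ∀ n : ℕ, 9 ≤ n → ∀ k : ℕ, 1 ≤ k → k ≤ 9 →
      ∃ p : ℕ, p.Prime ∧ (k - 1) * n < p ∧ p ≤ k * n := by
  intro n hn k hk hk9
  rcases lt_or_ge n 72 with h | h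
  · obtain ⟨p, hp, hpp⟩ := SierpinskiRows.exists_prime_of_lt_72 n h hn k (by omega) hk
    exact ⟨p, hpp, Finset.mem_Ioc.1 hp⟩
  · obtain rfl | hk1 := hk.eq_or_lt
    · exact ⟨2, Nat.prime_two, by omega, by omega⟩
    obtain rfl | hk8 := hk9.eq_or_lt
    · exact SierpinskiRows.exists_prime_top_row hn
    have hm : n ≤ (k - 1) * n := Nat.le_mul_of_pos_left n (by omega)
    obtain ⟨p, hp, h1, h2⟩ :=
      SierpinskiRows.exists_prime_top_row (n := (k - 1) * n / 8 + 1) (by omega)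
    refine ⟨p, hp, by omega, h2.trans ?_⟩
    obtain ⟨j, rfl⟩ : ∃ j, k = j + 1 := ⟨k - 1, by omega⟩
    rw [Nat.add_sub_cancel, add_one_mul]
    have hj : j * n ≤ 7 * n := Nat.mul_le_mul_right n (by omega)
    omega
end

section
/- If for every real number x ≥ 117 there exists a prime p with x < p < x + √x, then Sierpiński's Hypothesis H₁ holds: for every natural number n ≥ 2 and every k with 1 ≤ k ≤ n there exists a prime p with (k−1)·n < p ≤ k·n. -/
/-!
Put `x = (k - 1) * n`. Since `k ≤ n`, we have `√x < n`, so for `x ≥ 117` the hypothesis gives a prime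
in `(x, x + √x) ⊆ (x, k * n]`. The rows with `x < 117` are the first one, which contains `2`, and
finitely many others, which `small_rows` checks against the primes up to `127`.
-/

/-- The primes up to `127`. -/
def smallPrimes : List ℕ :=
  [2, 3, 5, 7, 11, 13, 17, 19, 23, 29, 31, 37, 41, 43, 47, 53, 59, 61, 67, 71, 73, 79, 83, 89, 97,
    101, 103, 107, 109, 113, 127]

lemma prime_of_mem_smallPrimes {p : ℕ} (hp : p ∈ smallPrimes) : p.Prime := by
  simp only [smallPrimes, List.mem_cons, List.not_mem_nil, or_false] at hp
  rcases hp with rfl | hp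
  · norm_num
  repeat' (rcases hp with rfl | hp; · norm_num)

/-- The rows starting below `117`, with `m = k - 1`. If `0 < m < n` and `m * n < 117`, then `m < 11`
and `n < 117`, so every such row other than the first falls within these bounds. -/
lemma small_rows : ∀ m < 11, ∀ n < 117, m < n ∧ 2 ≤ n ∧ m * n < 117 →
    ∃ p ∈ smallPrimes, m * n < p ∧ p ≤ (m + 1) * n := by
  decide +kernel

theorem sqrt_gap_conjecture_implies_H1
    (h : ∀ x : ℝ, 117 ≤ x →
      ∃ p : ℕ, p.Prime ∧ x < (p : ℝ) ∧ (p : ℝ) < x + Real.sqrt x) :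
    ∀ n : ℕ, 2 ≤ n → ∀ k : ℕ, 1 ≤ k → k ≤ n →
      ∃ p : ℕ, p.Prime ∧ (k - 1) * n < p ∧ p ≤ k * n := by
  intro n hn k hk hkn
  obtain ⟨m, rfl⟩ : ∃ m, k = m + 1 := ⟨k - 1, by omega⟩
  simp only [Nat.add_sub_cancel]
  rcases Nat.eq_zero_or_pos m with rfl | hm
  · exact ⟨2, Nat.prime_two, by omega, by omega⟩
  rcases lt_or_ge (m * n) 117 with hx | hx
  · obtain ⟨p, hp, h1, h2⟩ := small_rows m (by nlinarith) n (by nlinarith) ⟨by omega, hn, hx⟩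
    exact ⟨p, prime_of_mem_smallPrimes hp, h1, h2⟩
  · obtain ⟨p, hp, h1, h2⟩ := h ((m * n : ℕ) : ℝ) (by exact_mod_cast hx)
    refine ⟨p, hp, by exact_mod_cast h1, ?_⟩
    have hs : Real.sqrt ((m * n : ℕ) : ℝ) ≤ n := by
      apply Real.sqrt_le_iff.mpr
      refine ⟨by positivity, ?_⟩
      have : m * n ≤ n ^ 2 := by nlinarith
      exact_mod_cast this
    have h3 : (p : ℝ) ≤ ((m + 1) * n : ℕ) := by
      push_cast at h2 hs ⊢
      linarith
    exact_mod_cast h3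
end
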